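/- Let 1/2 < H < 1, c² = 1/(1 + 2H), and r_H(t) = 2c²(1+H) cosh(Ht) − c² cosh((1+H)t) + (1/2) c² |2 sinh(t/2)|^{2H+2}. Then lim_{t → ∞} e^{(1−H)t} r_H(t) = (1 + H)/2. In particular r_H(t) decays exponentially at rate ρ = 1 − H = min(H, 1 − H). -/

import Mathlib

open Filter Topology

/-- The correlation function of the Lamperti transform of IFBM, with `c² = 1/(1+2H)`:
`r_H(t) = 2c²(1+H) cosh(Ht) − c² cosh((1+H)t) + (1/2) c² |2 sinh(t/2)|^{2H+2}`. -/
noncomputable def lampertiCorr (H t : ℝ) : ℝ :=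
  2 * (1 / (1 + 2 * H)) * (1 + H) * Real.cosh (H * t)
    - (1 / (1 + 2 * H)) * Real.cosh ((1 + H) * t)
    + (1 / 2) * (1 / (1 + 2 * H)) * |2 * Real.sinh (t / 2)| ^ (2 * H + 2)

/-!
Put `u = e^{-t}` and `p = 2H + 2`. For `t > 0`, `|2 sinh (t/2)|^p = e^{(1+H)t} (1 - u)^p`, so
`e^{(1-H)t} r_H(t)` equals
`c² ((1+H) e^{(1-2H)t} - e^{-2Ht}/2 + ((1-u)^p - 1 + p u) / (2u²))`
(`exp_mul_lampertiCorr`): the growing terms `e^{(1+H)t}` and `e^{Ht}` of `r_H` are exactly the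
first two Taylor terms of the binomial. The two exponentials vanish in the limit because
`H > 1/2`, and the Taylor remainder tends to `p(p-1)/4 = (1+H)(1+2H)/2`
(`tendsto_binomial_remainder`), which `c²` turns into `(1+H)/2`.
-/

/-- The second-order Taylor coefficient of `(1 - u)^p` at `0`, by one application of
l'Hôpital's rule; the quotient of derivatives is then a difference quotient. -/
theorem tendsto_binomial_remainder (p : ℝ) :
    Tendsto (fun u : ℝ => ((1 - u) ^ p - 1 + p * u) / u ^ 2) (𝓝[>] 0)
      (𝓝 (p * (p - 1) / 2)) := by
  have hd : ∀ q u : ℝ, u < 1 →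
      HasDerivAt (fun u : ℝ => (1 - u) ^ q) (-(q * (1 - u) ^ (q - 1))) u := by
    intro q u hu
    have h := ((hasDerivAt_id u).const_sub 1).rpow_const (p := q)
      (Or.inl (sub_pos.2 hu).ne')
    simpa using h
  have hlt : ∀ᶠ u : ℝ in 𝓝[>] 0, u < 1 :=
    nhdsWithin_le_nhds (Iio_mem_nhds one_pos)
  refine HasDerivAt.lhopital_zero_nhdsGT
    (f' := fun u => -(p * (1 - u) ^ (p - 1)) + p) (g' := fun u => 2 * u) ?_ ?_ ?_ ?_ ?_ ?_
  · filter_upwards [hlt] with u hu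
    exact ((hd p u hu).sub_const 1).fun_add (hasDerivAt_const_mul p)
  · exact Eventually.of_forall fun u => by simpa using hasDerivAt_pow 2 u
  · filter_upwards [self_mem_nhdsWithin] with u hu
    exact mul_ne_zero two_ne_zero (ne_of_gt hu)
  · have hc : ContinuousAt (fun u : ℝ => (1 - u) ^ p - 1 + p * u) 0 :=
      ((hd p 0 one_pos).continuousAt.sub continuousAt_const).add (by fun_prop)
    have h := hc.tendsto
    simp only [sub_zero, Real.one_rpow, sub_self, mul_zero, add_zero] at h
    exact h.mono_left nhdsWithin_le_nhds
  · have hc : ContinuousAt (fun u : ℝ => u ^ 2) 0 := by fun_prop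
    have h := hc.tendsto
    simp only [ne_eq, OfNat.ofNat_ne_zero, not_false_eq_true, zero_pow] at h
    exact h.mono_left nhdsWithin_le_nhds
  · have h := ((hd (p - 1) 0 one_pos).tendsto_slope_zero_right).const_mul (-(p / 2))
    simp only [zero_add, sub_zero, Real.one_rpow, smul_eq_mul, mul_one] at h
    have e : p * (p - 1) / 2 = -(p / 2) * -(p - 1) := by ring
    rw [e]
    refine h.congr' ?_
    filter_upwards [self_mem_nhdsWithin] with u hu
    have hu0 : u ≠ 0 := ne_of_gt hu
    field_simp
    ring

theorem abs_two_sinh_half_rpow (p t : ℝ) (ht : 0 < t) :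
    |2 * Real.sinh (t / 2)| ^ p = Real.exp (t / 2 * p) * (1 - Real.exp (-t)) ^ p := by
  have hu : 0 < 1 - Real.exp (-t) := sub_pos.2 (Real.exp_lt_one_iff.2 (by linarith))
  have e : 2 * Real.sinh (t / 2) = Real.exp (t / 2) * (1 - Real.exp (-t)) := by
    rw [Real.sinh_eq, mul_sub, ← Real.exp_add]
    ring_nf
  rw [e, abs_of_pos (mul_pos (Real.exp_pos _) hu), Real.mul_rpow (Real.exp_pos _).le hu.le,
    ← Real.exp_mul]

theorem exp_mul_lampertiCorr (H t : ℝ) (ht : 0 < t) :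
    Real.exp ((1 - H) * t) * lampertiCorr H t =
      1 / (1 + 2 * H) * ((1 + H) * Real.exp ((1 - 2 * H) * t) - 1 / 2 * Real.exp (-(2 * H) * t)
        + 1 / 2 * (((1 - Real.exp (-t)) ^ (2 * H + 2) - 1 + (2 * H + 2) * Real.exp (-t))
          / Real.exp (-t) ^ 2)) := by
  rw [lampertiCorr, abs_two_sinh_half_rpow _ _ ht, Real.cosh_eq, Real.cosh_eq]
  generalize (1 - Real.exp (-t)) ^ (2 * H + 2) = B
  -- Every exponential is a monomial in `a = e^t` and `b = e^{Ht}`.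
  have e1 : Real.exp ((1 - H) * t) = Real.exp t / Real.exp (H * t) := by
    rw [← Real.exp_sub]; ring_nf
  have e2 : Real.exp ((1 + H) * t) = Real.exp t * Real.exp (H * t) := by
    rw [← Real.exp_add]; ring_nf
  have e3 : Real.exp (t / 2 * (2 * H + 2)) = Real.exp t * Real.exp (H * t) := by
    rw [← Real.exp_add]; ring_nf
  have e4 : Real.exp ((1 - 2 * H) * t) = Real.exp t / (Real.exp (H * t) * Real.exp (H * t)) := by
    rw [← Real.exp_add, ← Real.exp_sub]; ring_nf
  have e5 : Real.exp (-(2 * H) * t) = (Real.exp (H * t) * Real.exp (H * t))⁻¹ := by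
    rw [← Real.exp_add, ← Real.exp_neg]; ring_nf
  rw [Real.exp_neg, Real.exp_neg, Real.exp_neg, e1, e2, e3, e4, e5]
  have ha := Real.exp_ne_zero t
  have hb := Real.exp_ne_zero (H * t)
  generalize Real.exp t = a at *
  generalize Real.exp (H * t) = b at *
  generalize 1 / (1 + 2 * H) = c
  field_simp
  ring

/-- For `1/2 < H < 1`, `r_H(t) ~ (1+H)/2 · e^{−(1−H)t}` as `t → ∞`:
the correlation decays exponentially at rate `ρ = 1 − H = min(H, 1 − H)`. -/
theorem lamperti_corr_exponential_decay_large_H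
    (H : ℝ) (hH0 : 0 < H) (hH05 : 1 / 2 < H) (hH1 : H < 1) :
    Tendsto (fun t : ℝ => Real.exp ((1 - H) * t) * lampertiCorr H t) atTop
      (𝓝 ((1 + H) / 2)) := by
  have hexp : ∀ k : ℝ, k < 0 → Tendsto (fun t : ℝ => Real.exp (k * t)) atTop (𝓝 0) :=
    fun k hk => Real.tendsto_exp_atBot.comp (tendsto_id.const_mul_atTop_of_neg hk)
  have hu : Tendsto (fun t : ℝ => Real.exp (-t)) atTop (𝓝[>] 0) :=
    tendsto_nhdsWithin_iff.2 ⟨Real.tendsto_exp_neg_atTop_nhds_zero,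
      Eventually.of_forall fun t => Real.exp_pos _⟩
  have h := ((((hexp (1 - 2 * H) (by linarith)).const_mul (1 + H)).sub
    ((hexp (-(2 * H)) (by linarith)).const_mul (1 / 2))).add
    (((tendsto_binomial_remainder (2 * H + 2)).comp hu).const_mul (1 / 2))).const_mul
    (1 / (1 + 2 * H))
  have e : (1 + H) / 2 = 1 / (1 + 2 * H) * ((1 + H) * 0 - 1 / 2 * 0
      + 1 / 2 * ((2 * H + 2) * (2 * H + 2 - 1) / 2)) := by
    have : 1 + 2 * H ≠ 0 := by linarith
    field_simp
    ring
  rw [e]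
  refine h.congr' ?_
  filter_upwards [eventually_gt_atTop 0] with t ht
  exact (exp_mul_lampertiCorr H t ht).symm
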